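/- Let C = A ∪ B be an ℓ-critical set such that exactly two points a and a' of A lie on the boundary of the convex hull of C. Then A has exactly one point a* in the interior of the convex hull of A, and every point of A \ {a, a'} lies in the convex region bounded by the lines through a* and a and through a* and a' that contains neither a nor a' on its boundary. -/

import Mathlib

noncomputable section

/-- Points of the plane. -/
abbrev Pt : Type := ℝ × ℝ

/-- The cross product (signed area) of two planar vectors. -/
def cross2 (u v : Pt) : ℝ := u.1 * v.2 - u.2 * v.1

/-- The dot product of two planar vectors. -/
def dotp (v p : Pt) : ℝ := v.1 * p.1 + v.2 * p.2

/-- A set of points in the plane is in general position if no three of its points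
are collinear. -/
def GenPos (P : Set Pt) : Prop :=
  ∀ p ∈ P, ∀ q ∈ P, ∀ r ∈ P, p ≠ q → p ≠ r → q ≠ r →
    ¬ Collinear ℝ ({p, q, r} : Set Pt)

/-- A set of points is in convex position if no point of the set lies in the convex
hull of the other points. -/
def ConvexPos (S : Set Pt) : Prop :=
  ∀ p ∈ S, p ∉ convexHull ℝ (S \ {p})

/-- `H` is a `k`-hole in `P`: a subset of `P` of size `k` in convex position whose
convex hull contains no point of `P \ H`. -/
def IsKHole (k : ℕ) (P H : Finset Pt) : Prop :=
  H ⊆ P ∧ H.card = k ∧ ConvexPos (↑H : Set Pt) ∧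
    ∀ p ∈ P, p ∉ H → p ∉ convexHull ℝ (↑H : Set Pt)

/-- The number of `k`-holes in `P`. -/
def numKHoles (k : ℕ) (P : Finset Pt) : ℕ :=
  Set.ncard {H : Finset Pt | IsKHole k P H}

/-- For an `ℓ`-divided set `P = A ∪ B`, an `ℓ`-divided 5-hole is a 5-hole in `A ∪ B`
containing points of both `A` and `B`. -/
def DividedFiveHole (A B H : Finset Pt) : Prop :=
  IsKHole 5 (A ∪ B) H ∧ (↑H ∩ ↑A : Set Pt).Nonempty ∧ (↑H ∩ ↑B : Set Pt).Nonempty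

/-- `x` is an extremal point of `P`: it lies on the boundary of the convex hull of `P`. -/
def OnHullBoundary (P : Finset Pt) (x : Pt) : Prop :=
  x ∈ frontier (convexHull ℝ (↑P : Set Pt))

/-- An `ℓ`-divided set `C = A ∪ B` is `ℓ`-critical if neither part is in convex position
and, for every extremal point `x` of `C`, one of the sets `(C \ {x}) ∩ A` and
`(C \ {x}) ∩ B` is in convex position. -/
def LCritical (A B : Finset Pt) : Prop :=
  ¬ ConvexPos (↑A : Set Pt) ∧ ¬ ConvexPos (↑B : Set Pt) ∧
    ∀ x ∈ A ∪ B, OnHullBoundary (A ∪ B) x →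
      (ConvexPos (↑(A.erase x) : Set Pt) ∨ ConvexPos (↑(B.erase x) : Set Pt))

/-- The closed wedge with apex `a` swept clockwise from the ray `a→p` to the ray `a→q`.
If the clockwise angle from `a→p` to `a→q` is at most `π` the wedge is convex, otherwise
it is the corresponding reflex region. -/
def Wedge (a p q : Pt) : Set Pt :=
  if cross2 (p - a) (q - a) ≤ 0 then
    {x | cross2 (p - a) (x - a) ≤ 0 ∧ 0 ≤ cross2 (q - a) (x - a)}
  else
    {x | cross2 (p - a) (x - a) ≤ 0 ∨ 0 ≤ cross2 (q - a) (x - a)}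

/-- `W` is an `a`-wedge of `A`: one of the closed regions into which the rays from `a`
through the other points of `A` partition the plane, i.e. a wedge spanned by two
points of `A \ {a}` that are angularly consecutive around `a` (no other point of `A`
lies in the wedge). -/
def IsAWedge (A : Finset Pt) (a : Pt) (W : Set Pt) : Prop :=
  ∃ p ∈ A.erase a, ∃ q ∈ A.erase a, p ≠ q ∧ W = Wedge a p q ∧
    (↑A : Set Pt) ∩ Wedge a p q ⊆ {a, p, q}

/-- The combinatorial data of the `a*`-wedges of an `ℓ`-divided set `P = A ∪ B`, where
`ℓ` is the vertical line `x = x0` and `A` lies to its left: `aStar` is the rightmost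
interior point `a*` of `A`; `lbl` is the clockwise cyclic labeling `a_0, a_1, …` of
`A \ {a*}` (period `|A| - 1`), so that the `k`-th wedge `W_k` is swept clockwise from
the ray through `lbl (k-1)` to the ray through `lbl k` and contains no other point
of `A`; the wedges `W_1, …, W_t` are exactly those meeting `ℓ`, in top-to-bottom
order along `ℓ`. -/
structure StarSetup (x0 : ℝ) (A : Finset Pt) where
  aStar : Pt
  lbl : ℕ → Pt
  t : ℕ
  aStar_mem : aStar ∈ A
  aStar_interior : aStar ∈ interior (convexHull ℝ (↑A : Set Pt))
  aStar_rightmost : ∀ p ∈ A, p ∈ interior (convexHull ℝ (↑A : Set Pt)) → p.1 ≤ aStar.1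
  lbl_mem : ∀ k, lbl k ∈ A.erase aStar
  lbl_periodic : ∀ k, lbl (k + (A.card - 1)) = lbl k
  lbl_bij : ∀ p ∈ A.erase aStar, ∃! k, k ∈ Finset.Icc 1 (A.card - 1) ∧ lbl k = p
  consec : ∀ k ∈ Finset.Icc 1 (A.card - 1),
    (↑A : Set Pt) ∩ Wedge aStar (lbl (k - 1)) (lbl k) ⊆ {aStar, lbl (k - 1), lbl k}
  t_pos : 1 ≤ t
  t_le : t ≤ A.card - 1
  inter_iff : ∀ k ∈ Finset.Icc 1 (A.card - 1),
    ((Wedge aStar (lbl (k - 1)) (lbl k)) ∩ {p : Pt | p.1 = x0}).Nonempty ↔ k ≤ t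
  ordered : ∀ k ∈ Finset.Icc 1 t, ∀ k' ∈ Finset.Icc 1 t, k < k' →
    ∀ p ∈ (Wedge aStar (lbl (k - 1)) (lbl k)) ∩ {q : Pt | q.1 = x0},
    ∀ p' ∈ (Wedge aStar (lbl (k' - 1)) (lbl k')) ∩ {q : Pt | q.1 = x0},
      p'.2 ≤ p.2

/-- The `k`-th `a*`-wedge `W_k`. -/
def StarSetup.W {x0 : ℝ} {A : Finset Pt} (S : StarSetup x0 A) (k : ℕ) : Set Pt :=
  Wedge S.aStar (S.lbl (k - 1)) (S.lbl k)

/-- `w_k`, the number of points of `B` in the `k`-th `a*`-wedge. -/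
def StarSetup.w {x0 : ℝ} {A : Finset Pt} (S : StarSetup x0 A) (B : Finset Pt) (k : ℕ) : ℕ :=
  Set.ncard ((↑B : Set Pt) ∩ S.W k)

/-!
If a point `x` of `A` lies in the convex hull of `A \ {x}`, general position makes it an interior
point of a triangle with vertices in `A \ {x}`. Deleting `a` or `a'` from `A` leaves a set in convex
position, so `a` and `a'` are vertices of that triangle. The three cones at `x` opposite to the
sides of the triangle cover the plane. A point of `A` in a cone other than the one opposite to the
side `aa'` could replace `a` or `a'` as a vertex, which leaves `x` in the convex hull of the
remaining points; hence all points of `A` besides `a` and `a'` lie in the cone opposite to `aa'`.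

Every point of `A` interior to the convex hull of `A` is such an `x`. If `x` and `y` are two of
them, each lies in the cone at the other, so each lies in the triangle spanned by `a`, `a'` and the
other one. Since convex hulls have the anti-exchange property, `x` then lies on the segment `aa'`,
contrary to general position.
-/

section OppositeCone

variable {E : Type*} [AddCommGroup E] [Module ℝ E]

/-- The cone with apex `x` opposite to `T`: the points `x - ∑ cᵢ • (tᵢ - x)` with `cᵢ ≥ 0` and
`tᵢ ∈ T`. In the plane and for `T = {a, b}` not collinear with `x`, it is the region bounded by the
lines `xa` and `xb` that contains neither `a` nor `b`. -/
def oppositeCone (x : E) (T : Set E) : Set E :=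
  {p | x - p ∈ PointedCone.hull ℝ ((· - x) '' T)}

lemma mem_oppositeCone_self (x : E) (T : Set E) : x ∈ oppositeCone x T := by
  simp [oppositeCone]

lemma mem_oppositeCone_pair_iff {x a b p : E} :
    p ∈ oppositeCone x {a, b} ↔
      ∃ α β : ℝ, α ≤ 0 ∧ β ≤ 0 ∧ p - x = α • (a - x) + β • (b - x) := by
  simp only [oppositeCone, Set.mem_ofPred_eq, Set.image_pair, PointedCone.hull,
    Submodule.mem_span_pair]
  constructor
  · rintro ⟨α, β, h⟩
    refine ⟨-α, -β, neg_nonpos.2 α.2, neg_nonpos.2 β.2, ?_⟩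
    rw [← neg_sub x p, ← h, Nonneg.mk_smul, Nonneg.mk_smul]
    module
  · rintro ⟨α, β, hα, hβ, h⟩
    refine ⟨⟨-α, neg_nonneg.2 hα⟩, ⟨-β, neg_nonneg.2 hβ⟩, ?_⟩
    rw [← neg_sub p x, h, Nonneg.mk_smul, Nonneg.mk_smul]
    module

lemma mem_convexHull_insert_of_mem_oppositeCone {x p : E} {T : Set E}
    (hp : p ∈ oppositeCone x T) : x ∈ convexHull ℝ (insert p T) := by
  obtain ⟨c, hcT, hc, hsum⟩ := PointedCone.mem_hull_set.1 hp
  have hK := convex_convexHull ℝ (insert p T)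
  have hpK : p ∈ convexHull ℝ (insert p T) := subset_convexHull ℝ _ (Set.mem_insert p T)
  have hTK : ∀ v ∈ c.support, x + v ∈ convexHull ℝ (insert p T) := by
    intro v hv
    obtain ⟨t, ht, rfl⟩ := hcT hv
    simpa using subset_convexHull ℝ _ (Set.mem_insert_of_mem p ht)
  obtain hc₀ | hc₀ := c.support.eq_empty_or_nonempty
  · rw [Finsupp.support_eq_empty.1 hc₀, Finsupp.sum_zero_index, eq_comm, sub_eq_zero] at hsum
    rwa [hsum]
  have hM : 0 < ∑ v ∈ c.support, c v :=
    Finset.sum_pos (fun v hv => (hc v).lt_of_ne' (Finsupp.mem_support_iff.1 hv)) hc₀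
  have hcenter := hK.centerMass_mem (fun v _ => hc v) hM hTK
  convert hK hpK hcenter (a := 1 / (1 + ∑ v ∈ c.support, c v))
    (b := (∑ v ∈ c.support, c v) / (1 + ∑ v ∈ c.support, c v)) (by positivity) (by positivity)
    (by field_simp) using 1
  rw [Finsupp.sum] at hsum
  simp only [Finset.centerMass, smul_add, Finset.sum_add_distrib, ← Finset.sum_smul, hsum]
  match_scalars <;> field_simp <;> ring

lemma exists_mem_oppositeCone_image_compl {ι : Type*} [Finite ι] (b : AffineBasis ι ℝ E) {x : E}
    (hx : ∀ i, 0 < b.coord i x) (p : E) : ∃ j, p ∈ oppositeCone x (b '' {j}ᶜ) := by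
  have := Fintype.ofFinite ι
  have := b.nonempty
  obtain ⟨j, hj⟩ := Finite.exists_max fun i => b.coord i p / b.coord i x
  set r := b.coord j p / b.coord j x with hr
  have hnonneg (i : ι) : 0 ≤ r * b.coord i x - b.coord i p :=
    sub_nonneg.2 ((div_le_iff₀ (hx i)).1 (hj i))
  have hzero : r * b.coord j x - b.coord j p = 0 := by
    rw [hr, div_mul_cancel₀ _ (hx j).ne', sub_self]
  -- Adding `r` times the relation `∑ i, b.coord i x • (b i - x) = 0` to
  -- `x - p = -∑ i, b.coord i p • (b i - x)` makes all coefficients nonnegative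
  -- and the `j`-th one zero.
  have hsum : x - p = ∑ i, (r * b.coord i x - b.coord i p) • (b i - x) := by
    simp only [smul_sub, sub_smul, mul_smul, Finset.sum_sub_distrib, ← Finset.smul_sum,
      ← Finset.sum_smul, b.linear_combination_coord_eq_self, b.sum_coord_apply_eq_one]
    module
  refine ⟨j, ?_⟩
  rw [oppositeCone, Set.mem_ofPred_eq, hsum]
  refine sum_mem fun i _ => ?_
  obtain rfl | hij := eq_or_ne i j
  · simp [hzero]
  · exact PointedCone.smul_mem _ (hnonneg i)
      (PointedCone.subset_hull (Set.mem_image_of_mem _ (Set.mem_image_of_mem b hij)))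

lemma mem_oppositeCone_image_compl_of_notMem_convexHull {ι : Type*} [Finite ι]
    (b : AffineBasis ι ℝ E) {x p : E} (hx : ∀ i, 0 < b.coord i x) {S : Set E}
    (hbS : Set.range b ⊆ S) {j : ι} (hj : ∀ i ≠ j, x ∉ convexHull ℝ (S \ {b i}))
    (hpS : p ∈ S) (hpb : p ∉ b '' {j}ᶜ) : p ∈ oppositeCone x (b '' {j}ᶜ) := by
  obtain ⟨i, hi⟩ := exists_mem_oppositeCone_image_compl b hx p
  obtain rfl | hij := eq_or_ne i j
  · exact hi
  refine absurd (convexHull_mono ?_ (mem_convexHull_insert_of_mem_oppositeCone hi)) (hj i hij)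
  rintro _ (rfl | ⟨k, hk, rfl⟩)
  · exact ⟨hpS, fun h => hpb ⟨i, hij, h.symm⟩⟩
  · exact ⟨hbS ⟨k, rfl⟩, b.ind.injective.ne hk⟩

end OppositeCone

section ConvexHull

variable {E : Type*} [AddCommGroup E] [Module ℝ E]

lemma mem_convexHull_of_mem_convexHull_insert_insert {S : Set E} {x y : E} (hxy : x ≠ y)
    (hx : x ∈ convexHull ℝ (insert y S)) (hy : y ∈ convexHull ℝ (insert x S)) :
    x ∈ convexHull ℝ S := by
  obtain rfl | hS := S.eq_empty_or_nonempty
  · simp [hxy] at hx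
  simp only [convexHull_insert hS, convexJoin_singleton_left, Set.mem_iUnion, exists_prop,
    mem_segment_iff_wbtw] at hx hy
  obtain ⟨s, hs, hyxs⟩ := hx
  obtain ⟨t, ht, hxyt⟩ := hy
  exact (convex_convexHull ℝ S).segment_subset hs ht
    (mem_segment_iff_wbtw.2 (hyxs.symm.trans_expand_left hxyt hxy))

lemma mem_convexHull_diff_singleton_of_mem_interior [TopologicalSpace E] [IsTopologicalAddGroup E]
    [ContinuousSMul ℝ E] {S : Set E} {x : E} (hS : S.Nontrivial)
    (hx : x ∈ interior (convexHull ℝ S)) : x ∈ convexHull ℝ (S \ {x}) := by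
  obtain ⟨p, hpS, hpx⟩ := hS.exists_ne x
  obtain ⟨r, hz, hr⟩ := (((eventually_homothety_mem_of_mem_interior ℝ p hx).filter_mono
    nhdsWithin_le_nhds).and (self_mem_nhdsWithin (s := Set.Ioi 1))).exists
  rw [AffineMap.homothety_eq_lineMap] at hz
  have hxz : x ≠ AffineMap.lineMap p x r := fun h =>
    (AffineMap.lineMap_eq_right_iff.1 h.symm).elim hpx (ne_of_gt hr)
  have hpxz : Wbtw ℝ p x (AffineMap.lineMap p x r) := by
    simpa [AffineMap.lineMap_apply] using
      wbtw_smul_vadd_smul_vadd_of_nonneg_of_le p (x - p) zero_le_one hr.le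
  refine mem_convexHull_of_mem_convexHull_insert_insert hxz ?_ (convexHull_mono (by simp) hz)
  exact segment_subset_convexHull (Set.mem_insert_of_mem _ (Set.mem_sdiff_singleton.2 ⟨hpS, hpx⟩))
    (Set.mem_insert _ _) hpxz.mem_segment

end ConvexHull

namespace GenPos

variable {A : Set Pt}

lemma mono {S : Set Pt} (hA : GenPos A) (hS : S ⊆ A) : GenPos S :=
  fun p hp q hq r hr => hA p (hS hp) q (hS hq) r (hS hr)

lemma notMem_convexHull_pair (hA : GenPos A) {x p q : Pt} (hx : x ∈ A) (hp : p ∈ A) (hq : q ∈ A)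
    (hpx : p ≠ x) (hqx : q ≠ x) : x ∉ convexHull ℝ {p, q} := by
  rw [convexHull_pair, mem_segment_iff_wbtw]
  intro h
  obtain rfl | hpq := eq_or_ne p q
  · exact hpx ((wbtw_self_iff ℝ).1 h).symm
  · exact hA p hp x hx q hq hpx hpq hqx.symm h.collinear

lemma two_lt_card_of_mem_convexHull_range (hA : GenPos A) {x : Pt} (hx : x ∈ A) {ι : Type*}
    [Fintype ι] {z : ι → Pt} (hzA : Set.range z ⊆ A \ {x})
    (hxz : x ∈ convexHull ℝ (Set.range z)) : 2 < Fintype.card ι := by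
  have hthird (i j : ι) : ∃ k, z k ≠ z i ∧ z k ≠ z j := by
    by_contra! h
    refine hA.notMem_convexHull_pair hx (hzA ⟨i, rfl⟩).1 (hzA ⟨j, rfl⟩).1 (hzA ⟨i, rfl⟩).2
      (hzA ⟨j, rfl⟩).2 (convexHull_mono (Set.range_subset_iff.2 fun k => ?_) hxz)
    exact or_iff_not_imp_left.2 (h k)
  obtain ⟨i⟩ : Nonempty ι := Set.range_nonempty_iff_nonempty.1 (convexHull_nonempty_iff.1 ⟨x, hxz⟩)
  obtain ⟨j, hji, -⟩ := hthird i i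
  obtain ⟨k, hki, hkj⟩ := hthird i j
  exact Fintype.two_lt_card_iff.2
    ⟨i, j, k, ne_of_apply_ne z hji.symm, ne_of_apply_ne z hki.symm, ne_of_apply_ne z hkj.symm⟩

lemma exists_affineBasis (hA : GenPos A) {x : Pt} (hx : x ∈ A)
    (hxA : x ∈ convexHull ℝ (A \ {x})) :
    ∃ b : AffineBasis (Fin 3) ℝ Pt, Set.range b ⊆ A \ {x} ∧ ∀ i, 0 < b.coord i x := by
  obtain ⟨ι, _, z, w, hzA, hz, hw, hw₁, hwx⟩ := eq_pos_convex_span_of_mem_convexHull hxA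
  have hxz : x ∈ convexHull ℝ (Set.range z) :=
    mem_convexHull_of_exists_fintype w z (fun i => (hw i).le) hw₁ Set.mem_range_self hwx
  have hfinrank : Module.finrank ℝ Pt = 2 := by simp
  have hcard : Fintype.card ι = 3 := by
    refine le_antisymm ?_ (hA.two_lt_card_of_mem_convexHull_range hx hzA hxz)
    have := Submodule.finrank_le (vectorSpan ℝ (Set.range z))
    have := hz.card_le_finrank_succ
    lia
  have hspan : affineSpan ℝ (Set.range z) = ⊤ :=
    hz.affineSpan_eq_top_iff_card_eq_finrank_add_one.2 (by rw [hcard, hfinrank])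
  let b : AffineBasis ι ℝ Pt := ⟨z, hz, hspan⟩
  have hb (i : ι) : b.coord i x = w i := by
    rw [← hwx, ← Finset.univ.affineCombination_eq_linear_combination z w hw₁]
    exact b.coord_apply_combination_of_mem (Finset.mem_univ i) hw₁
  refine ⟨b.reindex (Fintype.equivFinOfCardEq hcard), ?_, fun i => ?_⟩
  · rwa [AffineBasis.coe_reindex, EquivLike.range_comp]
  · simp only [AffineBasis.coord_reindex, hb, hw]

lemma mem_interior_convexHull (hA : GenPos A) {x : Pt} (hx : x ∈ A)
    (hxA : x ∈ convexHull ℝ (A \ {x})) : x ∈ interior (convexHull ℝ A) := by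
  obtain ⟨b, hbA, hb⟩ := hA.exists_affineBasis hx hxA
  refine interior_mono (convexHull_mono (hbA.trans Set.sdiff_subset)) ?_
  rwa [b.interior_convexHull]

lemma mem_oppositeCone (hA : GenPos A) {a a' : Pt} (hne : a ≠ a') (ha : ConvexPos (A \ {a}))
    (ha' : ConvexPos (A \ {a'})) {x : Pt} (hx : x ∈ A) (hxa : x ≠ a) (hxa' : x ≠ a')
    (hxA : x ∈ convexHull ℝ (A \ {x})) {p : Pt} (hp : p ∈ A) (hpa : p ≠ a) (hpa' : p ≠ a') :
    p ∈ oppositeCone x {a, a'} := by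
  obtain rfl | hpx := eq_or_ne p x
  · exact mem_oppositeCone_self p _
  obtain ⟨b, hbA, hb⟩ := hA.exists_affineBasis hx hxA
  have hess {c : Pt} (hxc : x ≠ c) (hc : ConvexPos (A \ {c})) :
      x ∉ convexHull ℝ ((A \ {x}) \ {c}) := by
    rw [sdiff_right_comm]
    exact hc x ⟨hx, hxc⟩
  have hmem {c : Pt} (hc : x ∉ convexHull ℝ ((A \ {x}) \ {c})) : c ∈ Set.range b := by
    by_contra hcb
    have hxb : x ∈ convexHull ℝ (Set.range b) := interior_subset (by rwa [b.interior_convexHull])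
    exact hc (convexHull_mono (Set.subset_sdiff_singleton hbA hcb) hxb)
  obtain ⟨i, rfl⟩ := hmem (hess hxa ha)
  obtain ⟨i', rfl⟩ := hmem (hess hxa' ha')
  obtain ⟨j, hj⟩ : ∃ j : Fin 3, {j}ᶜ = ({i, i'} : Set (Fin 3)) := by
    have hthird : ∀ i i' : Fin 3, i ≠ i' → ∃ j, ∀ k, k ≠ j ↔ k = i ∨ k = i' := by decide
    exact (hthird i i' (ne_of_apply_ne b hne)).imp fun j => Set.ext
  rw [← Set.image_pair, ← hj]
  refine mem_oppositeCone_image_compl_of_notMem_convexHull b hb hbA ?_ ⟨hp, hpx⟩ ?_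
  · intro k hk
    obtain rfl | rfl : k ∈ ({i, i'} : Set (Fin 3)) := hj ▸ hk
    exacts [hess hxa ha, hess hxa' ha']
  · simp [hj, Set.image_pair, hpa, hpa']

lemma eq_of_mem_convexHull_diff_singleton (hA : GenPos A) {a a' : Pt} (haA : a ∈ A) (ha'A : a' ∈ A)
    (hne : a ≠ a') (ha : ConvexPos (A \ {a})) (ha' : ConvexPos (A \ {a'})) {x y : Pt} (hx : x ∈ A)
    (hxa : x ≠ a) (hxa' : x ≠ a') (hxA : x ∈ convexHull ℝ (A \ {x})) (hy : y ∈ A) (hya : y ≠ a)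
    (hya' : y ≠ a') (hyA : y ∈ convexHull ℝ (A \ {y})) : x = y := by
  by_contra hxy
  have hxp := mem_convexHull_insert_of_mem_oppositeCone
    (hA.mem_oppositeCone hne ha ha' hx hxa hxa' hxA hy hya hya')
  have hyp := mem_convexHull_insert_of_mem_oppositeCone
    (hA.mem_oppositeCone hne ha ha' hy hya hya' hyA hx hxa hxa')
  exact hA.notMem_convexHull_pair hx haA ha'A hxa.symm hxa'.symm
    (mem_convexHull_of_mem_convexHull_insert_insert hxy hxp hyp)

lemma exists_mem_interior_forall_mem_oppositeCone (hA : GenPos A) (hnot : ¬ ConvexPos A)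
    {a a' : Pt} (haA : a ∈ A) (ha'A : a' ∈ A) (hne : a ≠ a')
    (haint : a ∉ interior (convexHull ℝ A)) (ha'int : a' ∉ interior (convexHull ℝ A))
    (ha : ConvexPos (A \ {a})) (ha' : ConvexPos (A \ {a'})) :
    ∃ x ∈ A, x ∈ interior (convexHull ℝ A) ∧
      (∀ p ∈ A, p ∈ interior (convexHull ℝ A) → p = x) ∧
      ∀ p ∈ A, p ≠ a → p ≠ a' → p ∈ oppositeCone x {a, a'} := by
  obtain ⟨x, hx, hxA⟩ : ∃ x ∈ A, x ∈ convexHull ℝ (A \ {x}) := by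
    simpa [ConvexPos] using hnot
  have hxint := hA.mem_interior_convexHull hx hxA
  have hxa := ne_of_mem_of_not_mem hxint haint
  have hxa' := ne_of_mem_of_not_mem hxint ha'int
  refine ⟨x, hx, hxint, fun p hp hpint => ?_, fun p hp hpa hpa' =>
    hA.mem_oppositeCone hne ha ha' hx hxa hxa' hxA hp hpa hpa'⟩
  exact hA.eq_of_mem_convexHull_diff_singleton haA ha'A hne ha ha'
    hp (ne_of_mem_of_not_mem hpint haint) (ne_of_mem_of_not_mem hpint ha'int)
    (mem_convexHull_diff_singleton_of_mem_interior ⟨a, haA, a', ha'A, hne⟩ hpint) hx hxa hxa' hxA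

end GenPos

lemma OnHullBoundary.notMem_interior_convexHull {P : Finset Pt} {S : Set Pt} {x : Pt}
    (hx : OnHullBoundary P x) (hS : S ⊆ P) : x ∉ interior (convexHull ℝ S) :=
  fun h => hx.2 (interior_mono (convexHull_mono hS) h)

lemma LCritical.convexPos_diff_singleton {A B : Finset Pt} (hcrit : LCritical A B)
    (hAB : Disjoint A B) {x : Pt} (hxA : x ∈ A) (hx : OnHullBoundary (A ∪ B) x) :
    ConvexPos ((A : Set Pt) \ {x}) := by
  obtain h | h := hcrit.2.2 x (Finset.mem_union_left B hxA) hx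
  · rwa [Finset.coe_erase] at h
  · rw [Finset.erase_eq_of_notMem (Finset.disjoint_left.1 hAB hxA)] at h
    exact absurd h hcrit.2.1

theorem critical_two_extremal_structure_general {A B : Finset Pt} (hAB : Disjoint A B)
    (hgen : GenPos (A : Set Pt)) (hcrit : LCritical A B) {a a' : Pt} (ha : a ∈ A) (ha' : a' ∈ A)
    (hne : a ≠ a') (hbd : OnHullBoundary (A ∪ B) a) (hbd' : OnHullBoundary (A ∪ B) a') :
    ∃ aStar : Pt, aStar ∈ A ∧ aStar ∈ interior (convexHull ℝ (A : Set Pt)) ∧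
      (∀ p ∈ A, p ∈ interior (convexHull ℝ (A : Set Pt)) → p = aStar) ∧
      ∀ p ∈ A, p ≠ a → p ≠ a' →
        ∃ α β : ℝ, α ≤ 0 ∧ β ≤ 0 ∧
          p - aStar = α • (a - aStar) + β • (a' - aStar) := by
  have hsub : (A : Set Pt) ⊆ ↑(A ∪ B) := Finset.coe_subset.2 Finset.subset_union_left
  simpa only [mem_oppositeCone_pair_iff, Finset.mem_coe] using
    hgen.exists_mem_interior_forall_mem_oppositeCone hcrit.1 ha ha' hne
      (hbd.notMem_interior_convexHull hsub) (hbd'.notMem_interior_convexHull hsub)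
      (hcrit.convexPos_diff_singleton hAB ha hbd) (hcrit.convexPos_diff_singleton hAB ha' hbd')

/-- **Lemma 4(ii).** Let `C = A ∪ B` be an `ℓ`-critical set with exactly two points
`a, a'` of `A` on the boundary of the convex hull of `C`. Then `A` has exactly one
point `a*` in the interior of the convex hull of `A`, and every point of `A \ {a, a'}`
lies in the convex region spanned by the lines `a*a` and `a*a'` that contains neither
`a` nor `a'` on its boundary (the set of points `a* + α (a - a*) + β (a' - a*)` with
`α, β ≤ 0`). -/
theorem critical_two_extremal_structure
    (v : Pt) (hv : v ≠ 0) (c : ℝ) (A B : Finset Pt)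
    (hA : ∀ p ∈ A, dotp v p < c) (hB : ∀ p ∈ B, c < dotp v p)
    (hAne : A.Nonempty) (hBne : B.Nonempty)
    (hgen : GenPos (↑(A ∪ B) : Set Pt))
    (hcrit : LCritical A B)
    (a a' : Pt) (ha : a ∈ A) (ha' : a' ∈ A) (hne : a ≠ a')
    (hbd : {p : Pt | p ∈ A ∧ OnHullBoundary (A ∪ B) p} = {a, a'}) :
    ∃ aStar : Pt, aStar ∈ A ∧ aStar ∈ interior (convexHull ℝ (↑A : Set Pt)) ∧
      (∀ p ∈ A, p ∈ interior (convexHull ℝ (↑A : Set Pt)) → p = aStar) ∧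
      ∀ p ∈ A, p ≠ a → p ≠ a' →
        ∃ α β : ℝ, α ≤ 0 ∧ β ≤ 0 ∧
          p - aStar = α • (a - aStar) + β • (a' - aStar) := by
  have hAB : Disjoint A B :=
    Finset.disjoint_left.2 fun p hpA hpB => lt_asymm (hA p hpA) (hB p hpB)
  exact critical_two_extremal_structure_general hAB
    (hgen.mono (Finset.coe_subset.2 Finset.subset_union_left)) hcrit ha ha' hne
    (hbd.ge (Set.mem_insert a {a'})).2 (hbd.ge (Set.mem_insert_of_mem a rfl)).2

end
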